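/- arXiv:2203.15131 — 2 statements merged into one kernel-verified Lean document; each statement's English description precedes it below -/
import Mathlib

section
/- Let 0 < θ < 1, C > 0, let L ≥ 1 be an integer, and let (t_m)_{m≥1} be a sequence of nonnegative real numbers such that t_m ≤ C θ^m for every m > L. Define B_0 = 1 and, for 1 ≤ k ≤ L, B_k = ∑_{1 ≤ m_1 < ... < m_k ≤ L} t_{m_1} ··· t_{m_k}. Then for every n ≥ 1, the sum over all strictly increasing n-tuples of positive integers of the products of the t's satisfies ∑_{1 ≤ m_1 < ... < m_n} t_{m_1} ··· t_{m_n} ≤ c ∑_{k=0}^{min(n,L)} B_k (θ^L C)^{n-k}, where c = ∏_{j=1}^∞ (1-θ^j)^{-1}. In particular, for n > L one has ∑_{1 ≤ m_1 < ... < m_n} t_{m_1} ··· t_{m_n} ≤ ξ (θ^L C)^n where ξ = c ∑_{k=0}^{L} B_k (θ^L C)^{-k}. -/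
open Polynomial in
theorem esum_eq_coeff (s : Finset ℕ) (t : ℕ → ℝ) (n : ℕ) :
    ∑ A ∈ s.powersetCard n, ∏ i ∈ A, t i = (∏ i ∈ s, (1 + C (t i) * X)).coeff n := by
  rw [Finset.prod_one_add, finsetSum_coeff, Finset.powersetCard_eq_filter,
    Finset.sum_filter]
  refine Finset.sum_congr rfl fun A _ => ?_
  rw [Finset.prod_mul_distrib, Finset.prod_const, ← map_prod, coeff_C_mul_X_pow]
  simp only [eq_comm]

theorem esum_union (s u : Finset ℕ) (h : Disjoint s u) (t : ℕ → ℝ) (n : ℕ) :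
    ∑ A ∈ (s ∪ u).powersetCard n, ∏ i ∈ A, t i =
      ∑ k ∈ Finset.range (n + 1), (∑ A ∈ s.powersetCard k, ∏ i ∈ A, t i) *
        (∑ A ∈ u.powersetCard (n - k), ∏ i ∈ A, t i) := by
  simp only [esum_eq_coeff]
  rw [Finset.prod_union h, Polynomial.coeff_mul,
    Finset.Nat.sum_antidiagonal_eq_sum_range_succ_mk]

theorem esum_insert (a : ℕ) (u : Finset ℕ) (h : a ∉ u) (t : ℕ → ℝ) (n : ℕ) :
    ∑ A ∈ (insert a u).powersetCard (n + 1), ∏ i ∈ A, t i =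
      (∑ A ∈ u.powersetCard (n + 1), ∏ i ∈ A, t i) +
        t a * (∑ A ∈ u.powersetCard n, ∏ i ∈ A, t i) := by
  simp only [esum_eq_coeff]
  rw [Finset.prod_insert h, add_mul, one_mul, mul_assoc, Polynomial.coeff_add,
    Polynomial.coeff_C_mul, Polynomial.coeff_X_mul]

theorem tail_bound (θ C : ℝ) (hθ0 : 0 < θ) (hθ1 : θ < 1) (hC : 0 < C)
    (t : ℕ → ℝ) (ht0 : ∀ m, 0 ≤ t m) (d : ℕ) : ∀ (L : ℕ)
    (_ : ∀ m, L < m → t m ≤ C * θ ^ m) (j : ℕ),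
    ∑ A ∈ (Finset.Ioc L (L + d)).powersetCard j, ∏ i ∈ A, t i ≤
      (θ ^ L * C) ^ j * ∏ i ∈ Finset.range j, (1 - θ ^ (i + 1))⁻¹ := by
  have hpos : ∀ i : ℕ, 0 < 1 - θ ^ (i + 1) := fun i =>
    sub_pos.2 (pow_lt_one₀ hθ0.le hθ1 (Nat.succ_ne_zero i))
  have hP : ∀ j : ℕ, 0 < ∏ i ∈ Finset.range j, (1 - θ ^ (i + 1))⁻¹ := fun j =>
    Finset.prod_pos fun i _ => inv_pos.2 (hpos i)
  induction d with
  | zero =>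
    intro L ht j
    cases j with
    | zero => simp
    | succ j =>
      have := hP (j + 1)
      rw [add_zero, Finset.Ioc_self, Finset.powersetCard_eq_empty.2 (by simp), Finset.sum_empty]
      positivity
  | succ d ih =>
    intro L ht j
    cases j with
    | zero => simp
    | succ j =>
      have hI : Finset.Ioc L (L + (d + 1)) = insert (L + 1) (Finset.Ioc (L + 1) (L + 1 + d)) := by
        ext x; simp only [Finset.mem_Ioc, Finset.mem_insert]; omega
      rw [hI, esum_insert _ _ (by simp)]
      have h1 := ih (L + 1) (fun m hm => ht m (by omega)) (j + 1)
      have h2 := ih (L + 1) (fun m hm => ht m (by omega)) j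
      have h3 := ht (L + 1) (by omega)
      have h4 := mul_le_mul h3 h2
        (Finset.sum_nonneg fun A _ => Finset.prod_nonneg fun i _ => ht0 i) (by positivity)
      refine (add_le_add h1 h4).trans ?_
      rw [Finset.prod_range_succ]
      have hp := hP j
      set P := ∏ i ∈ Finset.range j, (1 - θ ^ (i + 1))⁻¹
      have hq := hpos j
      set x := θ ^ (j + 1) with hx
      have e1 : (θ ^ (L + 1) * C) ^ (j + 1) * (P * (1 - x)⁻¹) +
          C * θ ^ (L + 1) * ((θ ^ (L + 1) * C) ^ j * P)
          = ((θ ^ L * C) ^ (j + 1) * (P * (1 - x)⁻¹)) * (x * (1 + (1 - x))) := by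
        have : (θ ^ (L + 1) * C) ^ (j + 1) = (θ ^ L * C) ^ (j + 1) * x := by
          rw [hx, ← mul_pow]; ring
        have e2 : C * θ ^ (L + 1) * ((θ ^ (L + 1) * C) ^ j * P)
          = (θ ^ L * C) ^ (j + 1) * x * P := by rw [← this]; ring
        rw [e2, this]
        field_simp
      rw [e1]
      exact mul_le_of_le_one_right (by positivity) (by nlinarith [sq_nonneg (1 - x)])

theorem prod_le_c (θ : ℝ) (hθ0 : 0 < θ) (hθ1 : θ < 1) (j : ℕ) :
    ∏ i ∈ Finset.range j, (1 - θ ^ (i + 1))⁻¹ ≤ ∏' j : ℕ, (1 - θ ^ (j + 1))⁻¹ := by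
  have hpos : ∀ i : ℕ, 0 < 1 - θ ^ (i + 1) := fun i =>
    sub_pos.2 (pow_lt_one₀ hθ0.le hθ1 (Nat.succ_ne_zero i))
  have hm : Multipliable fun j : ℕ => (1 - θ ^ (j + 1))⁻¹ := by
    have hs : Summable fun j : ℕ => θ ^ (j + 1) * (1 - θ ^ (j + 1))⁻¹ := by
      refine Summable.of_nonneg_of_le (f := fun j => θ ^ j * (1 - θ)⁻¹)
        (fun i => mul_nonneg (by positivity) (inv_nonneg.2 (hpos i).le)) (fun i => ?_)
        ((summable_geometric_of_lt_one hθ0.le hθ1).mul_right _)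
      have h1 : θ ^ (i + 1) ≤ θ := pow_le_of_le_one hθ0.le hθ1.le (Nat.succ_ne_zero i)
      have h2 : θ ^ (i + 1) ≤ θ ^ i := pow_le_pow_of_le_one hθ0.le hθ1.le (Nat.le_succ i)
      exact mul_le_mul h2 (inv_anti₀ (by linarith) (by linarith)) (inv_nonneg.2 (hpos i).le)
        (by positivity)
    refine (Real.multipliable_one_add_of_summable hs).congr fun i => ?_
    have := (hpos i).ne'
    field_simp
    ring
  refine Monotone.ge_of_tendsto ?_ hm.hasProd.tendsto_prod_nat j
  refine monotone_nat_of_le_succ fun k => ?_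
  rw [Finset.prod_range_succ]
  refine le_mul_of_one_le_right (Finset.prod_nonneg fun i _ => inv_nonneg.2 (hpos i).le) ?_
  exact (one_le_inv₀ (hpos k)).2 (by linarith [pow_pos hθ0 (k + 1)])

theorem fin_bound (θ C : ℝ) (hθ0 : 0 < θ) (hθ1 : θ < 1) (hC : 0 < C)
    (L : ℕ) (t : ℕ → ℝ) (ht0 : ∀ m, 0 ≤ t m)
    (ht : ∀ m, L < m → t m ≤ C * θ ^ m) (n d : ℕ) :
    ∑ A ∈ (Finset.Icc 1 (L + d)).powersetCard n, ∏ i ∈ A, t i ≤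
      (∏' j : ℕ, (1 - θ ^ (j + 1))⁻¹) * ∑ k ∈ Finset.range (min n L + 1),
        (∑ A ∈ (Finset.Icc 1 L).powersetCard k, ∏ i ∈ A, t i) * (θ ^ L * C) ^ (n - k) := by
  have hI : Finset.Icc 1 (L + d) = Finset.Icc 1 L ∪ Finset.Ioc L (L + d) := by
    ext x; simp only [Finset.mem_Ioc, Finset.mem_union, Finset.mem_Icc]; omega
  have hD : Disjoint (Finset.Icc 1 L) (Finset.Ioc L (L + d)) := by
    rw [Finset.disjoint_left]; intro x; simp only [Finset.mem_Ioc, Finset.mem_Icc]; omega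
  rw [hI, esum_union _ _ hD]
  have hsub : Finset.range (min n L + 1) ⊆ Finset.range (n + 1) := by
    intro x; simp only [Finset.mem_range]; omega
  rw [← Finset.sum_subset hsub, Finset.mul_sum]
  · refine Finset.sum_le_sum fun k _ => ?_
    have h := (tail_bound θ C hθ0 hθ1 hC t ht0 d L ht (n - k)).trans
      (mul_le_mul_of_nonneg_left (prod_le_c θ hθ0 hθ1 (n - k)) (by positivity))
    have h2 := mul_le_mul_of_nonneg_left h
      (Finset.sum_nonneg fun A (_ : A ∈ (Finset.Icc 1 L).powersetCard k) =>
        Finset.prod_nonneg (s := A) fun i _ => ht0 i)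
    refine h2.trans (le_of_eq ?_)
    ring
  · intro k hk hk2
    simp only [Finset.mem_range] at hk hk2
    rw [Finset.powersetCard_eq_empty.2 (by simp; omega), Finset.sum_empty, zero_mul]

theorem tuple_bound (t : ℕ → ℝ) (ht0 : ∀ m, 0 ≤ t m) (L n : ℕ) (R : ℝ)
    (hR : ∀ d, ∑ A ∈ (Finset.Icc 1 (L + d)).powersetCard n, ∏ i ∈ A, t i ≤ R)
    (s : Finset {m : Fin n → ℕ // StrictMono m ∧ ∀ i, 1 ≤ m i}) :
    ∑ m ∈ s, ∏ i, t (m.1 i) ≤ R := by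
  classical
  let d := ∑ m ∈ s, ∑ i, m.1 i
  refine le_trans ?_ (hR d)
  let g : {m : Fin n → ℕ // StrictMono m ∧ ∀ i, 1 ≤ m i} → Finset ℕ :=
    fun m => Finset.univ.image m.1
  have hg : Function.Injective g := by
    intro a b hab
    apply Subtype.ext
    have h : Set.range a.1 = Set.range b.1 := by
      have := congrArg (fun u : Finset ℕ => (u : Set ℕ)) hab
      simpa [g] using this
    exact (StrictMono.range_inj a.2.1 b.2.1).1 h
  have hgp : ∀ m, ∏ i ∈ g m, t i = ∏ i, t (m.1 i) := fun m =>
    Finset.prod_image fun x _ y _ h => m.2.1.injective h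
  calc ∑ m ∈ s, ∏ i, t (m.1 i) = ∑ A ∈ s.image g, ∏ i ∈ A, t i := by
        rw [Finset.sum_image fun x _ y _ h => hg h]
        exact Finset.sum_congr rfl fun m _ => (hgp m).symm
    _ ≤ _ := by
        refine Finset.sum_le_sum_of_subset_of_nonneg ?_
          fun A _ _ => Finset.prod_nonneg fun i _ => ht0 i
        intro A hA
        obtain ⟨m, hm, rfl⟩ := Finset.mem_image.1 hA
        rw [Finset.mem_powersetCard]
        constructor
        · intro x hx
          obtain ⟨i, _, rfl⟩ := Finset.mem_image.1 hx
          have h1 : m.1 i ≤ ∑ i, m.1 i :=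
            Finset.single_le_sum (f := fun i => m.1 i) (fun _ _ => Nat.zero_le _)
              (Finset.mem_univ i)
          have h2 : ∑ i, m.1 i ≤ d :=
            Finset.single_le_sum (f := fun m : {m : Fin n → ℕ // StrictMono m ∧ ∀ i, 1 ≤ m i} =>
              ∑ i, m.1 i) (fun _ _ => Nat.zero_le _) hm
          have h3 := m.2.2 i
          rw [Finset.mem_Icc]; omega
        · rw [Finset.card_image_of_injective _ m.2.1.injective]; simp


/-- Combinatorial content of Theorem 5.3 (Coefficient bounds), with vanishing computational
errors: if `t_m ≤ C θ^m` for `m > L`, and `B_k` denotes the sum of products of the `t`'s over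
`k`-element subsets of `{1, …, L}` (with `B_0 = 1`), then for every `n ≥ 1` the sum of products
over strictly increasing `n`-tuples of positive integers is at most
`c ∑_{k=0}^{min(n,L)} B_k (θ^L C)^{n-k}`, and for `n > L` it is at most `ξ (θ^L C)^n` with
`ξ = c ∑_{k=0}^L B_k (θ^L C)^{-k}`, where `c = ∏_{j=1}^∞ (1-θ^j)⁻¹`. -/
theorem coefficient_bounds (θ C : ℝ) (hθ0 : 0 < θ) (hθ1 : θ < 1) (hC : 0 < C)
    (L : ℕ) (hL : 1 ≤ L) (t : ℕ → ℝ) (ht0 : ∀ m, 0 ≤ t m)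
    (ht : ∀ m, L < m → t m ≤ C * θ ^ m) :
    letI B : ℕ → ℝ := fun k => ∑ A ∈ (Finset.Icc 1 L).powersetCard k, ∏ i ∈ A, t i
    letI c : ℝ := ∏' j : ℕ, (1 - θ ^ (j + 1))⁻¹
    (∀ n : ℕ, 1 ≤ n →
      Summable (fun m : {m : Fin n → ℕ // StrictMono m ∧ ∀ i, 1 ≤ m i} => ∏ i, t (m.1 i)) ∧
      ∑' m : {m : Fin n → ℕ // StrictMono m ∧ ∀ i, 1 ≤ m i}, (∏ i, t (m.1 i))
        ≤ c * ∑ k ∈ Finset.range (min n L + 1), B k * (θ ^ L * C) ^ (n - k)) ∧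
    (∀ n : ℕ, L < n →
      ∑' m : {m : Fin n → ℕ // StrictMono m ∧ ∀ i, 1 ≤ m i}, (∏ i, t (m.1 i))
        ≤ (c * ∑ k ∈ Finset.range (L + 1), B k * ((θ ^ L * C) ^ k)⁻¹) * (θ ^ L * C) ^ n) := by
  beta_reduce
  have hb := fun n => tuple_bound t ht0 L n _ (fin_bound θ C hθ0 hθ1 hC L t ht0 ht n)
  have h0 : ∀ n, ∀ m : {m : Fin n → ℕ // StrictMono m ∧ ∀ i, 1 ≤ m i}, 0 ≤ ∏ i, t (m.1 i) :=
    fun n m => Finset.prod_nonneg fun i _ => ht0 _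
  refine ⟨fun n _ => ⟨summable_of_sum_le (h0 n) (hb n),
    Real.tsum_le_of_sum_le (h0 n) (hb n)⟩, fun n hn => ?_⟩
  refine (Real.tsum_le_of_sum_le (h0 n) (hb n)).trans (le_of_eq ?_)
  rw [min_eq_right hn.le, mul_assoc, Finset.sum_mul]
  congr 1
  refine Finset.sum_congr rfl fun k hk => ?_
  have hk' : k ≤ n := by have := Finset.mem_range.1 hk; omega
  have hx : θ ^ L * C ≠ 0 := by positivity
  rw [pow_sub₀ _ hx hk']
  ring
end

section
/- Let D = { z ∈ ℂ : |z - 1| < 3/2 }. Then: (i) the real interval [0,1] is contained in D; (ii) every z ∈ D satisfies 1 + z ≠ 0 and 2 + z ≠ 0; and (iii) for every z ∈ D, both 1/(1+z) ∈ D and 1/(2+z) ∈ D. -/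
theorem disc_aux (w : ℂ) (hw : 1 / 2 < w.re) : ‖1 / w - 1‖ < 3 / 2 := by
  have h0 : w ≠ 0 := by
    rintro rfl
    norm_num at hw
  have hp : 0 < ‖w‖ := norm_pos_iff.mpr h0
  have e : 1 / w - 1 = (1 - w) / w := by field_simp
  rw [e, norm_div, div_lt_iff₀ hp]
  have h1 : ‖1 - w‖ ^ 2 = (1 - w.re) ^ 2 + w.im ^ 2 := by
    rw [Complex.sq_norm, Complex.normSq_apply]
    simp
    ring
  have h2 : ‖w‖ ^ 2 = w.re ^ 2 + w.im ^ 2 := by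
    rw [Complex.sq_norm, Complex.normSq_apply]
    ring
  apply lt_of_pow_lt_pow_left₀ 2 (by positivity)
  rw [mul_pow, h1, h2]
  nlinarith [sq_nonneg w.im]

theorem disc_re (z : ℂ) (hz : ‖z - 1‖ < 3 / 2) : -(1 / 2) < z.re := by
  have h := (abs_lt.mp (lt_of_le_of_lt (Complex.abs_re_le_norm (z - 1)) hz)).1
  simp only [Complex.sub_re, Complex.one_re] at h
  linarith

/-- For the disc `D = {z : |z - 1| < 3/2}`: (i) `[0,1] ⊆ D`; (ii) `1 + z ≠ 0` and
`2 + z ≠ 0` for `z ∈ D`; and (iii) `D` is mapped into itself by `z ↦ 1/(1+z)` and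
`z ↦ 1/(2+z)`. -/
theorem disc_invariance_E2 :
    letI D : Set ℂ := {z : ℂ | ‖z - 1‖ < 3 / 2}
    (∀ x : ℝ, x ∈ Set.Icc (0 : ℝ) 1 → (x : ℂ) ∈ D) ∧
    (∀ z ∈ D, 1 + z ≠ 0 ∧ 2 + z ≠ 0) ∧
    (∀ z ∈ D, 1 / (1 + z) ∈ D ∧ 1 / (2 + z) ∈ D) := by
  refine ⟨?_, ?_, ?_⟩
  · rintro x ⟨hx0, hx1⟩
    show ‖(x : ℂ) - 1‖ < 3 / 2
    rw [← Complex.ofReal_one, ← Complex.ofReal_sub, Complex.norm_real, Real.norm_eq_abs, abs_lt]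
    constructor <;> linarith
  · intro z hz
    have h := disc_re z hz
    constructor
    · intro h0
      have := congrArg Complex.re h0
      simp at this
      linarith
    · intro h0
      have := congrArg Complex.re h0
      simp at this
      linarith
  · intro z hz
    have h := disc_re z hz
    constructor
    · apply disc_aux
      simp only [Complex.add_re, Complex.one_re]
      linarith
    · apply disc_aux
      simp only [Complex.add_re, Complex.re_ofNat]
      linarith
end
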